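/- arXiv:1711.04576 — 4 statements merged into one kernel-verified Lean document; each statement's English description precedes it below -/
import Mathlib

section
/- (Quantitative Poincaré recurrence.) For any measurable set A ⊆ X, one has limsup_{t→+∞} μ(A ∩ φ_t⁻¹ A) ≥ μ(A)². -/
open MeasureTheory Filter Topology

/-! If `μ(A ∩ φ_t⁻¹ A) ≤ c` for all `t ≥ S`, then the sets `φ_{nS}⁻¹ A`, `n ∈ ℕ`, all have measure
`μ(A)` and pairwise overlaps of measure at most `c`. The sum of `n` of their indicators has integral
`n μ(A)` and squared `L²` norm at most `n² c + O(n)`, so testing it against the constant function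
`1` by Cauchy–Schwarz, dividing by `n²` and letting `n → ∞` gives `μ(A)² ≤ c` on a probability
space. -/

section InnerProduct

open scoped RealInnerProductSpace

variable {ι E : Type*} [NormedAddCommGroup E] [InnerProductSpace ℝ E] {v : ι → E} {b c : ℝ}

lemma norm_sum_sq_le_of_pairwise_inner_le (s : Finset ι) (hnorm : ∀ i ∈ s, ‖v i‖ ^ 2 ≤ b)
    (hinner : (s : Set ι).Pairwise fun i j => ⟪v i, v j⟫ ≤ c) :
    ‖∑ i ∈ s, v i‖ ^ 2 ≤ s.card * (b - c) + (s.card : ℝ) ^ 2 * c := by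
  classical
  have hentry (i) (hi : i ∈ s) (j) (hj : j ∈ s) :
      ⟪v i, v j⟫ ≤ (if i = j then b - c else 0) + c := by
    split_ifs with hij
    · simpa [hij] using hnorm j hj
    · simpa using hinner hi hj hij
  calc ‖∑ i ∈ s, v i‖ ^ 2 = ∑ i ∈ s, ∑ j ∈ s, ⟪v i, v j⟫ := by
        rw [← real_inner_self_eq_norm_sq, sum_inner]
        simp only [inner_sum]
    _ ≤ ∑ i ∈ s, ∑ j ∈ s, ((if i = j then b - c else 0) + c) := by
        gcongr with i hi j hj
        exact hentry i hi j hj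
    _ = ∑ _i ∈ s, ((b - c) + s.card * c) := by
        refine Finset.sum_congr rfl fun i hi => ?_
        simp [Finset.sum_add_distrib, hi]
    _ = s.card * (b - c) + (s.card : ℝ) ^ 2 * c := by
        rw [Finset.sum_const, nsmul_eq_mul]
        ring

lemma card_mul_sq_le_of_pairwise_inner_le {a : ℝ} (e : E) (s : Finset ι)
    (he : ∀ i ∈ s, ⟪e, v i⟫ = a) (hnorm : ∀ i ∈ s, ‖v i‖ ^ 2 ≤ b)
    (hinner : (s : Set ι).Pairwise fun i j => ⟪v i, v j⟫ ≤ c) :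
    (s.card * a) ^ 2 ≤ ‖e‖ ^ 2 * (s.card * (b - c) + (s.card : ℝ) ^ 2 * c) :=
  calc (s.card * a) ^ 2 = ⟪e, ∑ i ∈ s, v i⟫ ^ 2 := by
        rw [inner_sum, Finset.sum_congr rfl he, Finset.sum_const, nsmul_eq_mul]
    _ ≤ (‖e‖ * ‖∑ i ∈ s, v i‖) ^ 2 := sq_le_sq.2 <| by
        simpa using abs_real_inner_le_norm e (∑ i ∈ s, v i)
    _ = ‖e‖ ^ 2 * ‖∑ i ∈ s, v i‖ ^ 2 := mul_pow _ _ _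
    _ ≤ ‖e‖ ^ 2 * (s.card * (b - c) + (s.card : ℝ) ^ 2 * c) := by
        gcongr
        exact norm_sum_sq_le_of_pairwise_inner_le s hnorm hinner

lemma sq_le_norm_sq_mul_of_pairwise_inner_le [Infinite ι] {a : ℝ} (e : E)
    (he : ∀ i, ⟪e, v i⟫ = a) (hnorm : ∀ i, ‖v i‖ ^ 2 ≤ b)
    (hinner : Pairwise fun i j => ⟪v i, v j⟫ ≤ c) : a ^ 2 ≤ ‖e‖ ^ 2 * c := by
  have hscaled (n : ℕ) (hn : 0 < n) : a ^ 2 ≤ ‖e‖ ^ 2 * ((b - c) / n + c) := by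
    obtain ⟨s, rfl⟩ := Infinite.exists_subset_card_eq ι n
    have hcard : (0 : ℝ) < s.card := mod_cast hn
    refine le_of_mul_le_mul_left ?_ (pow_pos hcard 2)
    calc (s.card : ℝ) ^ 2 * a ^ 2 = (s.card * a) ^ 2 := (mul_pow _ _ _).symm
      _ ≤ ‖e‖ ^ 2 * (s.card * (b - c) + (s.card : ℝ) ^ 2 * c) :=
        card_mul_sq_le_of_pairwise_inner_le e s (fun i _ => he i) (fun i _ => hnorm i)
          (hinner.set_pairwise _)
      _ = (s.card : ℝ) ^ 2 * (‖e‖ ^ 2 * ((b - c) / s.card + c)) := by field_simp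
  have hlim : Tendsto (fun n : ℕ => ‖e‖ ^ 2 * ((b - c) / n + c)) atTop (𝓝 (‖e‖ ^ 2 * c)) := by
    simpa using ((tendsto_const_div_atTop_nhds_zero_nat (b - c)).add_const c).const_mul (‖e‖ ^ 2)
  exact ge_of_tendsto hlim ((eventually_gt_atTop 0).mono hscaled)

end InnerProduct

section Measure

variable {X : Type*} [MeasurableSpace X] {μ : Measure X} [IsFiniteMeasure μ]

lemma sq_le_measureReal_univ_mul_of_pairwise_inter_le {ι : Type*} [Infinite ι] {B : ι → Set X}
    (hB : ∀ i, MeasurableSet (B i)) {a c : ℝ} (ha : ∀ i, μ.real (B i) = a)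
    (hc : Pairwise fun i j => μ.real (B i ∩ B j) ≤ c) : a ^ 2 ≤ μ.real Set.univ * c := by
  let indicatorL2 (s : Set X) (hs : MeasurableSet s) : Lp ℝ 2 μ :=
    indicatorConstLp 2 hs (measure_ne_top μ s) 1
  have hinner {s t : Set X} (hs : MeasurableSet s) (ht : MeasurableSet t) :
      inner ℝ (indicatorL2 s hs) (indicatorL2 t ht) = μ.real (s ∩ t) :=
    L2.real_inner_indicatorConstLp_one_indicatorConstLp_one hs ht
  have hnorm {s : Set X} (hs : MeasurableSet s) : ‖indicatorL2 s hs‖ ^ 2 = μ.real s := by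
    rw [← real_inner_self_eq_norm_sq, hinner, Set.inter_self]
  rw [← hnorm MeasurableSet.univ]
  refine sq_le_norm_sq_mul_of_pairwise_inner_le (b := a)
    (v := fun i => indicatorL2 (B i) (hB i))
    (indicatorL2 Set.univ MeasurableSet.univ) (fun i => ?_) (fun i => ?_) (fun i j hij => ?_)
  · rw [hinner, Set.univ_inter, ha]
  · rw [hnorm, ha]
  · simpa only [hinner] using hc hij

end Measure

section Semigroup

variable {X T : Type*} [MeasurableSpace X] {μ : Measure X} {φ : T → X → X} {A : Set X}

lemma measureReal_preimage_inter_preimage_add [Add T] (hadd : ∀ t s, φ (t + s) = φ t ∘ φ s)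
    (hpres : ∀ t, MeasurePreserving (φ t) μ μ) (hA : MeasurableSet A) (t s : T) :
    μ.real (φ s ⁻¹' A ∩ φ (t + s) ⁻¹' A) = μ.real (A ∩ φ t ⁻¹' A) := by
  rw [hadd, Set.preimage_comp, ← Set.preimage_inter, (hpres s).measureReal_preimage
    (hA.inter ((hpres t).measurable hA)).nullMeasurableSet]

variable [AddMonoid T] [Preorder T] [AddLeftMono T] [IsFiniteMeasure μ]

lemma measureReal_sq_le_of_forall_ge_inter_preimage_le (hadd : ∀ t s, φ (t + s) = φ t ∘ φ s)
    (hpres : ∀ t, MeasurePreserving (φ t) μ μ) (hA : MeasurableSet A) {S : T} (hS : 0 ≤ S) {c : ℝ}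
    (hc : ∀ t, S ≤ t → μ.real (A ∩ φ t ⁻¹' A) ≤ c) : μ.real A ^ 2 ≤ μ.real Set.univ * c := by
  let B (n : ℕ) : Set X := φ (n • S) ⁻¹' A
  have hlt {m n : ℕ} (hmn : m < n) : μ.real (B m ∩ B n) ≤ c := by
    have hsplit : n • S = (n - m) • S + m • S := by rw [← add_nsmul, Nat.sub_add_cancel hmn.le]
    simp only [B]
    rw [hsplit, measureReal_preimage_inter_preimage_add hadd hpres hA]
    exact hc _ (le_self_nsmul hS (Nat.sub_ne_zero_of_lt hmn))
  refine sq_le_measureReal_univ_mul_of_pairwise_inter_le (B := B)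
    (fun n => (hpres _).measurable hA)
    (fun n => (hpres _).measureReal_preimage hA.nullMeasurableSet) (fun m n hmn => ?_)
  rcases hmn.lt_or_gt with hmn | hnm
  · exact hlt hmn
  · rw [Set.inter_comm]
    exact hlt hnm

theorem quantitative_poincare_recurrence_general [IsDirectedOrder T]
    (hadd : ∀ t s, φ (t + s) = φ t ∘ φ s) (hpres : ∀ t, MeasurePreserving (φ t) μ μ)
    (hA : MeasurableSet A) :
    μ.real A ^ 2 ≤ μ.real Set.univ * limsup (fun t => μ.real (A ∩ φ t ⁻¹' A)) atTop := by
  set L := limsup (fun t => μ.real (A ∩ φ t ⁻¹' A)) atTop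
  have hbdd : IsBoundedUnder (· ≤ ·) atTop fun t => μ.real (A ∩ φ t ⁻¹' A) :=
    isBoundedUnder_of ⟨μ.real Set.univ, fun _ => measureReal_mono (Set.subset_univ _)⟩
  have hgt (c : ℝ) (hc : L < c) : μ.real A ^ 2 ≤ μ.real Set.univ * c := by
    obtain ⟨S, hS, hSc⟩ := ((eventually_ge_atTop 0).and
      (eventually_forall_ge_atTop.2 (eventually_lt_of_limsup_lt hc hbdd))).exists
    exact measureReal_sq_le_of_forall_ge_inter_preimage_le hadd hpres hA hS
      fun t ht => (hSc t ht).le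
  have hlim : Tendsto (fun c => μ.real Set.univ * c) (𝓝[>] L) (𝓝 (μ.real Set.univ * L)) :=
    (tendsto_id.mono_left nhdsWithin_le_nhds).const_mul _
  exact ge_of_tendsto hlim (eventually_mem_nhdsWithin.mono hgt)

end Semigroup

/-- **Quantitative Poincaré recurrence.** For any measurable set `A ⊆ X`,
`limsup_{t→∞} μ(A ∩ φ_t⁻¹ A) ≥ μ(A)²`. -/
theorem quantitative_poincare_recurrence
    {X : Type*} [MeasurableSpace X] (μ : Measure X) [IsProbabilityMeasure μ]
    (φ : ℝ → X → X)
    (hmeas : Measurable fun p : ℝ × X => φ p.1 p.2)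
    (h0 : φ 0 = id)
    (hgroup : ∀ t s : ℝ, φ (t + s) = φ t ∘ φ s)
    (hpres : ∀ t : ℝ, MeasurePreserving (φ t) μ μ)
    (A : Set X) (hA : MeasurableSet A) :
    (μ A).toReal ^ 2 ≤
      Filter.limsup (fun t : ℝ => (μ (A ∩ φ t ⁻¹' A)).toReal) atTop := by
  simpa [Measure.real] using quantitative_poincare_recurrence_general hgroup hpres hA
end

section
/- (Almost-sure recurrence for measure-preserving flows on metric spaces.) For μ-almost every y ∈ X there exists a sequence (t_k) of positive reals with t_k → ∞ as k → ∞ such that dist(φ_{t_k} y, y) → 0 as k → ∞. -/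
open MeasureTheory Filter Topology

theorem iterate_eq_apply_nsmul {T X : Type*} [AddMonoid T] {φ : T → X → X}
    (h0 : φ 0 = id) (hadd : ∀ t s : T, φ (t + s) = φ t ∘ φ s) (t : T) (n : ℕ) :
    (φ t)^[n] = φ (n • t) := by
  induction n with
  | zero => rw [zero_nsmul, h0, Function.iterate_zero]
  | succ n ih => rw [Function.iterate_succ, ih, succ_nsmul, hadd]

section SecondCountable

variable {X : Type*} [TopologicalSpace X] [SecondCountableTopology X]
  [MeasurableSpace X] [OpensMeasurableSpace X] {μ : Measure X}

theorem ae_exists_strictMono_tendsto_iterate {f : X → X} (hf : Conservative f μ) :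
    ∀ᵐ y ∂μ, ∃ n : ℕ → ℕ, StrictMono n ∧ Tendsto (fun k => f^[n k] y) atTop (𝓝 y) := by
  filter_upwards [hf.ae_frequently_mem_of_mem_nhds] with y hy
  have hcluster : MapClusterPt y atTop (fun n => f^[n] y) :=
    mapClusterPt_iff_frequently.mpr hy
  exact hcluster.tendsto_subseq

theorem almost_sure_recurrence_general {T : Type*} [AddCommMonoid T] [LinearOrder T]
    [IsOrderedCancelAddMonoid T] [Archimedean T] {φ : T → X → X} (h0 : φ 0 = id)
    (hadd : ∀ t s : T, φ (t + s) = φ t ∘ φ s) {t : T} (ht : 0 < t)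
    (hcons : Conservative (φ t) μ) :
    ∀ᵐ y ∂μ, ∃ tk : ℕ → T, (∀ k, 0 < tk k) ∧ Tendsto tk atTop atTop ∧
      Tendsto (fun k => φ (tk k) y) atTop (𝓝 y) := by
  filter_upwards [ae_exists_strictMono_tendsto_iterate hcons] with y ⟨n, hn, hy⟩
  simp only [iterate_eq_apply_nsmul h0 hadd] at hy
  have hpos (k : ℕ) : 0 < n (k + 1) := (Nat.zero_le _).trans_lt (hn k.lt_succ_self)
  have htop : Tendsto (fun k => n k • t) atTop atTop :=
    hn.tendsto_atTop.atTop_nsmul_const ht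
  exact ⟨fun k => n (k + 1) • t, fun k => nsmul_pos ht (hpos k).ne',
    htop.comp (tendsto_add_atTop_nat 1), hy.comp (tendsto_add_atTop_nat 1)⟩

end SecondCountable

/-- **Almost-sure recurrence for measure-preserving flows on metric spaces.** For
`μ`-almost every `y ∈ X` there is a sequence of positive times `t_k → ∞` such that
`dist(φ_{t_k} y, y) → 0`. -/
theorem almost_sure_recurrence
    {X : Type*} [MetricSpace X] [TopologicalSpace.SeparableSpace X]
    [MeasurableSpace X] [BorelSpace X]
    (μ : Measure X) [IsProbabilityMeasure μ]
    (φ : ℝ → X → X)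
    (hmeas : Measurable fun p : ℝ × X => φ p.1 p.2)
    (h0 : φ 0 = id)
    (hgroup : ∀ t s : ℝ, φ (t + s) = φ t ∘ φ s)
    (hpres : ∀ t : ℝ, MeasurePreserving (φ t) μ μ) :
    ∀ᵐ y ∂μ, ∃ tk : ℕ → ℝ, (∀ k, 0 < tk k) ∧ Tendsto tk atTop atTop ∧
      Tendsto (fun k => dist (φ (tk k) y) y) atTop (𝓝 0) := by
  have : SecondCountableTopology X := UniformSpace.secondCountable_of_separable X
  simp_rw [← tendsto_iff_dist_tendsto_zero]
  exact almost_sure_recurrence_general h0 hgroup one_pos (hpres 1).conservative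
end

section
/- (Coercivity of the second almost conservation law.) For every α ∈ (0,1) and all real sequences u, v with ‖u‖₂ < ∞ and ‖v‖ < ∞, and every real Q ≥ 0, the quantity G₂ := E + (α/2) Σ_{j≥0} (m₀² + λ_j) u_j v_j + (α²/4) ‖u‖₂², where E := (1/2)(‖u‖₁² + ‖v‖²) + Q, satisfies G₂ ≥ (1/4) E; in particular G₂ ≥ 0. -/
open scoped BigOperators

/-!
Termwise, the cross term of `G₂` completes the square `(α w u + v)² / 4`, which uses up all of
`(α² / 4) w² u²` but only half of the density `v² / 2` of `E`. What is left over still dominates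
a quarter of `E`.
-/

section Summability

variable {ι : Type*}

theorem summable_mul_of_summable_sq {f g : ι → ℝ} (hf : Summable fun j => f j ^ 2)
    (hg : Summable fun j => g j ^ 2) : Summable fun j => f j * g j := by
  have habs : Summable fun j => |f j| * |g j| :=
    Real.summable_mul_of_Lp_Lq_of_nonneg .two_two (fun _ => abs_nonneg _) (fun _ => abs_nonneg _)
      (by simpa only [Real.rpow_two, sq_abs] using hf)
      (by simpa only [Real.rpow_two, sq_abs] using hg)
  exact .of_abs (by simpa only [abs_mul] using habs)

theorem summable_mul_sq_of_summable_sq_mul_sq {w u : ι → ℝ} {c : ℝ} (hc : 0 < c)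
    (hw : ∀ j, c ≤ w j) (hu : Summable fun j => w j ^ 2 * u j ^ 2) :
    Summable fun j => w j * u j ^ 2 := by
  have hw_nonneg : ∀ j, 0 ≤ w j := fun j => hc.le.trans (hw j)
  refine Summable.of_nonneg_of_le (fun j => mul_nonneg (hw_nonneg j) (sq_nonneg _))
    (fun j => ?_) (hu.mul_left c⁻¹)
  calc w j * u j ^ 2 = c⁻¹ * (c * w j * u j ^ 2) := by field_simp
    _ ≤ c⁻¹ * (w j * w j * u j ^ 2) := by
      have := hw_nonneg j
      gcongr
      exact hw j
    _ = c⁻¹ * (w j ^ 2 * u j ^ 2) := by rw [sq (w j)]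

end Summability

theorem quarter_energy_density_le {w : ℝ} (hw : 0 ≤ w) (α u v : ℝ) :
    1 / 4 * (1 / 2 * (w * u ^ 2 + v ^ 2)) ≤
      1 / 2 * (w * u ^ 2 + v ^ 2) + α / 2 * (w * u * v) + α ^ 2 / 4 * (w ^ 2 * u ^ 2) := by
  have hremainder : 0 ≤ 1 / 4 * (α * (w * u) + v) ^ 2 + 3 / 8 * (w * u ^ 2) + 1 / 8 * v ^ 2 := by
    positivity
  linear_combination hremainder

theorem G2_coercive_general {ι : Type*} {w : ι → ℝ} (hw : ∀ j, 0 ≤ w j) (α : ℝ) {u v : ι → ℝ}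
    (hu₁ : Summable fun j => w j * u j ^ 2) (hu₂ : Summable fun j => w j ^ 2 * u j ^ 2)
    (hv : Summable fun j => v j ^ 2) {Q : ℝ} (hQ : 0 ≤ Q) :
    ∀ E G₂ : ℝ,
      E = (1 / 2) * ((∑' j, w j * u j ^ 2) + ∑' j, v j ^ 2) + Q →
      G₂ = E + (α / 2) * (∑' j, w j * u j * v j) + (α ^ 2 / 4) * ∑' j, w j ^ 2 * u j ^ 2 →
      (1 / 4) * E ≤ G₂ ∧ 0 ≤ G₂ := by
  intro E G₂ hE hG₂
  have huv : Summable fun j => w j * u j * v j :=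
    summable_mul_of_summable_sq (by simpa only [mul_pow] using hu₂) hv
  have energy := (hu₁.hasSum.add hv.hasSum).mul_left (1 / 2)
  have modified_energy :=
    (energy.add (huv.hasSum.mul_left (α / 2))).add (hu₂.hasSum.mul_left (α ^ 2 / 4))
  have quadratic_part_le :=
    hasSum_le (fun j => quarter_energy_density_le (hw j) α (u j) (v j))
      (energy.mul_left (1 / 4)) modified_energy
  have hE_nonneg : 0 ≤ E := by
    have := energy.nonneg fun j => by have := hw j; positivity
    linarith
  have hcoercive : (1 / 4) * E ≤ G₂ := by linarith
  exact ⟨hcoercive, by linarith⟩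

/-- **Coercivity of the second almost conservation law.** For `α ∈ (0,1)`, sequences
`u, v` with `‖u‖₂ < ∞`, `‖v‖ < ∞` and `Q ≥ 0`, the quantity
`G₂ = E + (α/2) Σ_j (m₀² + λ_j) u_j v_j + (α²/4)‖u‖₂²`, with
`E = (1/2)(‖u‖₁² + ‖v‖²) + Q`, satisfies `G₂ ≥ (1/4) E`; in particular `G₂ ≥ 0`. -/
theorem G2_coercive
    (lam : ℕ → ℝ) (hmono : Monotone lam) (hlam : ∀ j, 0 ≤ lam j)
    (m0sq : ℝ) (hc : 0 < m0sq + lam 0)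
    (α : ℝ) (hα : 0 < α ∧ α < 1)
    (u v : ℕ → ℝ)
    (hu : Summable fun j => (m0sq + lam j) ^ 2 * u j ^ 2)
    (hv : Summable fun j => v j ^ 2)
    (Q : ℝ) (hQ : 0 ≤ Q) :
    ∀ E G₂ : ℝ,
      E = (1 / 2) * ((∑' j, (m0sq + lam j) * u j ^ 2) + ∑' j, v j ^ 2) + Q →
      G₂ = E + (α / 2) * (∑' j, (m0sq + lam j) * u j * v j) +
        (α ^ 2 / 4) * ∑' j, (m0sq + lam j) ^ 2 * u j ^ 2 →
      (1 / 4) * E ≤ G₂ ∧ 0 ≤ G₂ := by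
  have hw : ∀ j, m0sq + lam 0 ≤ m0sq + lam j := fun j => by gcongr; exact hmono j.zero_le
  exact G2_coercive_general (fun j => hc.le.trans (hw j)) α
    (summable_mul_sq_of_summable_sq_mul_sq hc hw hu) hu hv hQ
end

section
/- (Domination of G₂ by the energy and its dissipation rate.) Fix ε ∈ (0,1). There exists α₀ ∈ (0,1] such that for every α ∈ (0,α₀), all real sequences u, v with ‖u‖₂ < ∞ and ‖v‖₁ < ∞, and every real Q ≥ 0, one has G₂ ≤ (5E + L₂)/4, where G₂ := E + (α/2) Σ_{j≥0} (m₀² + λ_j) u_j v_j + (α²/4) ‖u‖₂², L₂ := (1/2)((1−ε)‖u‖₂² + ‖v‖₁²), and E := (1/2)(‖u‖₁² + ‖v‖²) + Q. -/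
open scoped BigOperators

/-!
By Young's inequality the cross term satisfies `α ⟨u, v⟩ ≤ α² ‖u‖₂² + ‖v‖² / 4`, so that
`G₂ - E ≤ (3 / 4) α² ‖u‖₂² + ‖v‖² / 8`. The `v`-term is absorbed by `E / 4`, and the `u`-term by the
contribution `(1 - ε) ‖u‖₂² / 8` of `L₂ / 4` as soon as `6 α² ≤ 1 - ε`.
-/

namespace KleinGordon

variable {ι : Type*} {w u v : ι → ℝ} {c ε m n Q : ℝ}

/-- The squared Sobolev norm `‖u‖ₘ²` of order `m`, computed in an eigenbasis in which `-Δ₀` has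
eigenvalues `w`. It is `0` if the sum diverges; see `MemSobolev`. -/
noncomputable def sobolevNormSq (w : ι → ℝ) (m : ℝ) (u : ι → ℝ) : ℝ :=
  ∑' i, w i ^ m * u i ^ 2

/-- Membership in the Sobolev space of order `m`: the condition `‖u‖ₘ < ∞`. -/
def MemSobolev (w : ι → ℝ) (m : ℝ) (u : ι → ℝ) : Prop :=
  Summable fun i => w i ^ m * u i ^ 2

/-- The pairing `-∫ v Δ₀ u`, in an eigenbasis in which `-Δ₀` has eigenvalues `w`. -/
noncomputable def pairing (w u v : ι → ℝ) : ℝ :=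
  ∑' i, w i * u i * v i

/-- The Klein-Gordon energy `E` of the state `(u, v)`. The value `Q` of its quartic part is a
parameter, since only its sign matters. -/
noncomputable def energy (w u v : ι → ℝ) (Q : ℝ) : ℝ :=
  1 / 2 * (sobolevNormSq w 1 u + sobolevNormSq w 0 v) + Q

/-- The functional `G₂`: the energy perturbed at scale `α` by the pairing of `u` with `v` and by
`‖u‖₂²`. -/
noncomputable def modifiedEnergy (w : ι → ℝ) (α : ℝ) (u v : ι → ℝ) (Q : ℝ) : ℝ :=
  energy w u v Q + α / 2 * pairing w u v + α ^ 2 / 4 * sobolevNormSq w 2 u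

/-- The dissipation rate `L₂`, with the share `ε` of `‖u‖₂²` given up. -/
noncomputable def dissipation (w : ι → ℝ) (ε : ℝ) (u v : ι → ℝ) : ℝ :=
  1 / 2 * ((1 - ε) * sobolevNormSq w 2 u + sobolevNormSq w 1 v)

theorem sobolevNormSq_nonneg (hw : ∀ i, 0 ≤ w i) (m : ℝ) (u : ι → ℝ) :
    0 ≤ sobolevNormSq w m u :=
  tsum_nonneg fun i => mul_nonneg (Real.rpow_nonneg (hw i) m) (sq_nonneg (u i))

theorem MemSobolev.mono_exponent (hc : 0 < c) (hw : ∀ i, c ≤ w i) (hmn : m ≤ n)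
    (hu : MemSobolev w n u) : MemSobolev w m u := by
  have hpos i : 0 < w i := hc.trans_le (hw i)
  have rpow_le i : w i ^ m ≤ c ^ (m - n) * w i ^ n :=
    calc w i ^ m = w i ^ (m - n) * w i ^ n := by rw [← Real.rpow_add (hpos i), sub_add_cancel]
      _ ≤ c ^ (m - n) * w i ^ n :=
        mul_le_mul_of_nonneg_right
          (Real.rpow_le_rpow_of_nonpos hc (hw i) (sub_nonpos.2 hmn))
          (Real.rpow_nonneg (hpos i).le n)
  refine (hu.mul_left (c ^ (m - n))).of_nonneg_of_le
    (fun i => mul_nonneg (Real.rpow_nonneg (hpos i).le m) (sq_nonneg (u i))) fun i => ?_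
  rw [← mul_assoc]
  exact mul_le_mul_of_nonneg_right (rpow_le i) (sq_nonneg (u i))

theorem MemSobolev.summable_pairing (hu : MemSobolev w 2 u) (hv : MemSobolev w 0 v) :
    Summable fun i => w i * u i * v i := by
  refine (hu.add hv).of_norm_bounded fun i => ?_
  have young := two_mul_le_add_sq |w i * u i| |v i|
  rw [sq_abs, sq_abs, mul_pow] at young
  rw [Real.norm_eq_abs, abs_mul, Real.rpow_two, Real.rpow_zero, one_mul]
  linarith [mul_nonneg (abs_nonneg (w i * u i)) (abs_nonneg (v i))]

theorem two_mul_pairing_le (hu : MemSobolev w 2 u) (hv : MemSobolev w 0 v) (a b : ℝ) :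
    2 * a * b * pairing w u v ≤ a ^ 2 * sobolevNormSq w 2 u + b ^ 2 * sobolevNormSq w 0 v := by
  have hau := hu.mul_left (a ^ 2)
  have hbv := hv.mul_left (b ^ 2)
  unfold pairing sobolevNormSq
  rw [← tsum_mul_left, ← tsum_mul_left, ← tsum_mul_left, ← hau.tsum_add hbv]
  refine ((hu.summable_pairing hv).mul_left _).tsum_le_tsum (fun i => ?_) (hau.add hbv)
  calc 2 * a * b * (w i * u i * v i) = 2 * (a * (w i * u i)) * (b * v i) := by ring
    _ ≤ (a * (w i * u i)) ^ 2 + (b * v i) ^ 2 := two_mul_le_add_sq _ _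
    _ = a ^ 2 * (w i ^ (2 : ℝ) * u i ^ 2) + b ^ 2 * (w i ^ (0 : ℝ) * v i ^ 2) := by
      rw [Real.rpow_two, Real.rpow_zero]; ring

theorem modifiedEnergy_le_energy_add (hu : MemSobolev w 2 u) (hv : MemSobolev w 0 v) (α Q : ℝ) :
    modifiedEnergy w α u v Q ≤
      energy w u v Q + 3 / 4 * α ^ 2 * sobolevNormSq w 2 u + 1 / 8 * sobolevNormSq w 0 v := by
  unfold modifiedEnergy
  linarith [two_mul_pairing_le hu hv α (1 / 2)]

theorem sobolevNormSq_zero_le_energy (hw : ∀ i, 0 ≤ w i) (hQ : 0 ≤ Q) :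
    1 / 2 * sobolevNormSq w 0 v ≤ energy w u v Q := by
  unfold energy
  linarith [sobolevNormSq_nonneg hw 1 u]

theorem sobolevNormSq_two_le_dissipation (hw : ∀ i, 0 ≤ w i) :
    1 / 2 * (1 - ε) * sobolevNormSq w 2 u ≤ dissipation w ε u v := by
  unfold dissipation
  linarith [sobolevNormSq_nonneg hw 1 v]

end KleinGordon

open KleinGordon in
theorem G2_dominated_by_E_and_L2_general {ι : Type*} {w u v : ι → ℝ} {c α ε Q : ℝ}
    (hc : 0 < c) (hw : ∀ i, c ≤ w i) (hα : 6 * α ^ 2 ≤ 1 - ε)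
    (hu : MemSobolev w 2 u) (hv : MemSobolev w 1 v) (hQ : 0 ≤ Q) :
    modifiedEnergy w α u v Q ≤ (5 * energy w u v Q + dissipation w ε u v) / 4 := by
  have hw₀ i : 0 ≤ w i := hc.le.trans (hw i)
  have hv₀ : MemSobolev w 0 v := hv.mono_exponent hc hw zero_le_one
  have hG := modifiedEnergy_le_energy_add hu hv₀ α Q
  have hE : 1 / 2 * sobolevNormSq w 0 v ≤ energy w u v Q := sobolevNormSq_zero_le_energy hw₀ hQ
  have hL : 1 / 2 * (1 - ε) * sobolevNormSq w 2 u ≤ dissipation w ε u v :=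
    sobolevNormSq_two_le_dissipation hw₀
  have absorb : 6 * α ^ 2 * sobolevNormSq w 2 u ≤ (1 - ε) * sobolevNormSq w 2 u :=
    mul_le_mul_of_nonneg_right hα (sobolevNormSq_nonneg hw₀ 2 u)
  linarith

/-- **Domination of `G₂` by the energy and its dissipation rate.** Fix `ε ∈ (0,1)`.
There is `α₀ ∈ (0,1]` such that for all `α ∈ (0,α₀)`, sequences `u, v` with
`‖u‖₂ < ∞`, `‖v‖₁ < ∞` and `Q ≥ 0`, one has `G₂ ≤ (5E + L₂)/4`, where
`G₂ = E + (α/2) Σ_j (m₀²+λ_j) u_j v_j + (α²/4)‖u‖₂²`,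
`L₂ = (1/2)((1−ε)‖u‖₂² + ‖v‖₁²)` and `E = (1/2)(‖u‖₁² + ‖v‖²) + Q`. -/
theorem G2_dominated_by_E_and_L2
    (lam : ℕ → ℝ) (hmono : Monotone lam) (hlam : ∀ j, 0 ≤ lam j)
    (m0sq : ℝ) (hc : 0 < m0sq + lam 0)
    (ε : ℝ) (hε : 0 < ε ∧ ε < 1) :
    ∃ α₀ : ℝ, 0 < α₀ ∧ α₀ ≤ 1 ∧
      ∀ α : ℝ, 0 < α → α < α₀ →
      ∀ u v : ℕ → ℝ,
        (Summable fun j => (m0sq + lam j) ^ 2 * u j ^ 2) →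
        (Summable fun j => (m0sq + lam j) * v j ^ 2) →
      ∀ Q : ℝ, 0 ≤ Q →
      ∀ E G₂ L₂ : ℝ,
        E = (1 / 2) * ((∑' j, (m0sq + lam j) * u j ^ 2) + ∑' j, v j ^ 2) + Q →
        G₂ = E + (α / 2) * (∑' j, (m0sq + lam j) * u j * v j) +
          (α ^ 2 / 4) * ∑' j, (m0sq + lam j) ^ 2 * u j ^ 2 →
        L₂ = (1 / 2) * ((1 - ε) * (∑' j, (m0sq + lam j) ^ 2 * u j ^ 2) +
          ∑' j, (m0sq + lam j) * v j ^ 2) →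
        G₂ ≤ (5 * E + L₂) / 4 := by
  refine ⟨√((1 - ε) / 6), Real.sqrt_pos.2 (by linarith), Real.sqrt_le_one.2 (by linarith), ?_⟩
  rintro α hα₀ hα u v hu hv Q hQ E G₂ L₂ rfl rfl rfl
  have hα_sq : 6 * α ^ 2 ≤ 1 - ε := by linarith [(Real.lt_sqrt hα₀.le).1 hα]
  have hw j : m0sq + lam 0 ≤ m0sq + lam j := add_le_add_right (hmono j.zero_le) m0sq
  simpa only [KleinGordon.modifiedEnergy, KleinGordon.energy, KleinGordon.dissipation,
    KleinGordon.pairing, KleinGordon.sobolevNormSq, Real.rpow_zero, Real.rpow_one, Real.rpow_two,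
    one_mul] using
    G2_dominated_by_E_and_L2_general (w := fun j => m0sq + lam j) (u := u) (v := v) hc hw hα_sq
      (by simpa only [KleinGordon.MemSobolev, Real.rpow_two] using hu)
      (by simpa only [KleinGordon.MemSobolev, Real.rpow_one] using hv) hQ
end
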